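/- Let 1 ≤ d < r and let M be a representation of Γ_r. Then: (a) M has constant d-socle rank if and only if the dual representation DM has constant d-radical rank; (b) M has the equal d-socle property if and only if DM has the equal d-radical property. -/

import Mathlib

open Module LinearMap

universe u

/-- A finite-dimensional representation of the `r`-Kronecker quiver `Γ_r` over `k`:
two finite-dimensional `k`-vector spaces `M₁`, `M₂` and `r` linear maps `M₁ → M₂`. -/
structure KRep (k : Type u) [Field k] (r : ℕ) : Type (u + 1) where
  V1 : Type u
  V2 : Type u
  [addV1 : AddCommGroup V1]
  [addV2 : AddCommGroup V2]
  [modV1 : Module k V1]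
  [modV2 : Module k V2]
  [finV1 : FiniteDimensional k V1]
  [finV2 : FiniteDimensional k V2]
  f : Fin r → V1 →ₗ[k] V2

attribute [instance] KRep.addV1 KRep.addV2 KRep.modV1 KRep.modV2 KRep.finV1 KRep.finV2

variable {k : Type u} [Field k] {r : ℕ}

/-- For `α ∈ k^r`, the operator `x^M_α = ∑ i, αᵢ • M(γᵢ) : M₁ → M₂`. -/
def KRep.x (M : KRep k r) (α : Fin r → k) : M.V1 →ₗ[k] M.V2 :=
  ∑ i, α i • M.f i

/-- The space `Hom(M, N)` of morphisms of representations, as a `k`-submodule of the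
pairs of linear maps `(f₁ : M₁ → N₁, f₂ : M₂ → N₂)`; membership is the condition
`f₂ ∘ M(γᵢ) = N(γᵢ) ∘ f₁` for all `i`. -/
def KHom (M N : KRep k r) : Submodule k ((M.V1 →ₗ[k] N.V1) × (M.V2 →ₗ[k] N.V2)) where
  carrier := {p | ∀ i, p.2 ∘ₗ M.f i = N.f i ∘ₗ p.1}
  add_mem' := by
    intro a b ha hb i
    simp only [Prod.snd_add, Prod.fst_add, LinearMap.add_comp, LinearMap.comp_add, ha i, hb i]
  zero_mem' := by intro i; simp
  smul_mem' := by
    intro c a ha i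
    simp only [Prod.smul_snd, Prod.smul_fst, LinearMap.smul_comp, LinearMap.comp_smul, ha i]

/-- The representation `X_U` attached to a subspace `U ⊆ k^r`:
`(X_U)₁ = k`, `(X_U)₂ = k^r/U`, and `X_U(γᵢ)(c) = c · (eᵢ + U)`. -/
def XU (U : Submodule k (Fin r → k)) : KRep k r where
  V1 := k
  V2 := (Fin r → k) ⧸ U
  f := fun i => LinearMap.toSpanSingleton k _ (Submodule.Quotient.mk (Pi.single i 1))

/-- The `M₁`-part of the socle: `{m ∈ M₁ : x^M_u(m) = 0 for all u ∈ U}`. -/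
def KRep.socKer (M : KRep k r) (U : Submodule k (Fin r → k)) : Submodule k M.V1 :=
  ⨅ u ∈ U, LinearMap.ker (M.x u)

/-- `Soc_U(M) = {m ∈ M₁ : x^M_u(m) = 0 ∀ u ∈ U} ⊕ M₂`, as a subspace of `M₁ ⊕ M₂`. -/
def KRep.soc (M : KRep k r) (U : Submodule k (Fin r → k)) : Submodule k (M.V1 × M.V2) :=
  (M.socKer U).prod ⊤

/-- `Rad_U(M) = ∑_{u ∈ U} x^M_u(M₁) ⊆ M₂`. -/
def KRep.rad (M : KRep k r) (U : Submodule k (Fin r → k)) : Submodule k M.V2 :=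
  ⨆ u ∈ U, LinearMap.range (M.x u)

/-- Direct sum of two representations. -/
def KRep.sum (M N : KRep k r) : KRep k r where
  V1 := M.V1 × N.V1
  V2 := M.V2 × N.V2
  f := fun i => (M.f i).prodMap (N.f i)

/-- Isomorphism of representations. -/
def KIso (M N : KRep k r) : Prop :=
  ∃ (e1 : M.V1 ≃ₗ[k] N.V1) (e2 : M.V2 ≃ₗ[k] N.V2),
    ∀ i, (e2 : M.V2 →ₗ[k] N.V2) ∘ₗ M.f i = N.f i ∘ₗ (e1 : M.V1 →ₗ[k] N.V1)

/-- A representation is nonzero if its dimension vector is not `(0,0)`. -/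
def KRep.Nonzero (M : KRep k r) : Prop :=
  finrank k M.V1 ≠ 0 ∨ finrank k M.V2 ≠ 0

/-- A representation is indecomposable if it is nonzero and not isomorphic to a direct
sum of two nonzero representations. -/
def KRep.Indecomposable (M : KRep k r) : Prop :=
  M.Nonzero ∧ ∀ A B : KRep k r, A.Nonzero → B.Nonzero → ¬ KIso M (A.sum B)

/-- A representation is simple if its dimension vector is `(1,0)` or `(0,1)`. -/
def KRep.IsSimple (M : KRep k r) : Prop :=
  (finrank k M.V1 = 1 ∧ finrank k M.V2 = 0) ∨ (finrank k M.V1 = 0 ∧ finrank k M.V2 = 1)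

/-- `M` has constant `d`-socle rank: `dim_k Soc_U(M)` is independent of `U ∈ Gr_{d,r}`. -/
def KRep.ConstSocRank (d : ℕ) (M : KRep k r) : Prop :=
  ∃ c : ℕ, ∀ U : Submodule k (Fin r → k), finrank k U = d → finrank k (M.soc U) = c

/-- `M` has the equal `d`-socle property: `Soc_U(M)` is independent of `U ∈ Gr_{d,r}`. -/
def KRep.ESP (d : ℕ) (M : KRep k r) : Prop :=
  ∀ U V : Submodule k (Fin r → k), finrank k U = d → finrank k V = d → M.soc U = M.soc V

/-- `M` has constant `d`-radical rank: `dim_k Rad_U(M)` is independent of `U ∈ Gr_{d,r}`. -/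
def KRep.ConstRadRank (d : ℕ) (M : KRep k r) : Prop :=
  ∃ c : ℕ, ∀ U : Submodule k (Fin r → k), finrank k U = d → finrank k (M.rad U) = c

/-- `M` has the equal `d`-radical property: `Rad_U(M)` is independent of `U ∈ Gr_{d,r}`. -/
def KRep.ERP (d : ℕ) (M : KRep k r) : Prop :=
  ∀ U V : Submodule k (Fin r → k), finrank k U = d → finrank k V = d → M.rad U = M.rad V

/-- The dual representation `DM`: `(DM)₁ = M₂*`, `(DM)₂ = M₁*`, `DM(γᵢ) = M(γᵢ)*`. -/
def KRep.dual (M : KRep k r) : KRep k r where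
  V1 := Module.Dual k M.V2
  V2 := Module.Dual k M.V1
  f := fun i => (M.f i).dualMap

/-!
Since `x^{DM}_u` is the transpose of `x^M_u`, its range is the annihilator of `ker x^M_u`, and
annihilators of subspaces of a finite-dimensional space turn intersections into sums. Hence
`Rad_U(DM)` is the annihilator of the `M₁`-part of `Soc_U(M)`. So `Rad_U(DM)` and `Soc_U(M)`
determine each other, and `dim Soc_U(M) + dim Rad_U(DM) = dim M₁ + dim M₂` for every `U`.
-/

theorem dualMap_sum_smul {R M N ι : Type*} [CommSemiring R] [AddCommMonoid M] [Module R M]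
    [AddCommMonoid N] [Module R N] (s : Finset ι) (a : ι → R) (f : ι → M →ₗ[R] N) :
    (∑ i ∈ s, a i • f i).dualMap = ∑ i ∈ s, a i • (f i).dualMap := by
  simp only [dualMap_def, map_sum, map_smul]

theorem dualAnnihilator_iInf₂ {K V : Type*} [Field K] [AddCommGroup V] [Module K V]
    [FiniteDimensional K V] {ι : Sort*} {κ : ι → Sort*} (p : ∀ i, κ i → Submodule K V) :
    (⨅ (i) (j), p i j).dualAnnihilator = ⨆ (i) (j), (p i j).dualAnnihilator :=
  (Subspace.orderIsoFiniteDimensional (K := K) (V := V)).map_iInf₂ p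

theorem finrank_submodule_prod {R M N : Type*} [Ring R] [StrongRankCondition R]
    [AddCommGroup M] [Module R M] [AddCommGroup N] [Module R N] (p : Submodule R M)
    (q : Submodule R N) [Module.Free R p] [Module.Finite R p] [Module.Free R q]
    [Module.Finite R q] :
    finrank R (p.prod q) = finrank R p + finrank R q := by
  have h_range : range (p.subtype.prodMap q.subtype) = p.prod q := by
    rw [range_prodMap, p.range_subtype, q.range_subtype]
  rw [← h_range, finrank_range_of_inj (p.injective_subtype.prodMap q.injective_subtype),
    finrank_prod]

theorem exists_forall_eq_iff_of_add_eq {α G : Type*} [AddCancelCommMonoid G] {p : α → Prop}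
    {f g : α → G} {n : G} (h : ∀ a, p a → f a + g a = n) :
    (∃ c, ∀ a, p a → f a = c) ↔ ∃ c, ∀ a, p a → g a = c := by
  have of_left {u v : α → G} (huv : ∀ a, p a → u a + v a = n) :
      (∃ c, ∀ a, p a → u a = c) → ∃ c, ∀ a, p a → v a = c := by
    rintro ⟨c, hc⟩
    by_cases hp : ∃ a₀, p a₀
    · obtain ⟨a₀, ha₀⟩ := hp
      have c_add {a : α} (ha : p a) : c + v a = n := hc a ha ▸ huv a ha
      exact ⟨v a₀, fun a ha => add_left_cancel ((c_add ha).trans (c_add ha₀).symm)⟩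
    · exact ⟨0, fun a ha => (hp ⟨a, ha⟩).elim⟩
  exact ⟨of_left h, of_left fun a ha => (add_comm _ _).trans (h a ha)⟩

namespace KRep

theorem x_dual (M : KRep k r) (α : Fin r → k) : M.dual.x α = (M.x α).dualMap :=
  (dualMap_sum_smul Finset.univ α M.f).symm

theorem rad_dual (M : KRep k r) (U : Submodule k (Fin r → k)) :
    M.dual.rad U = (M.socKer U).dualAnnihilator := by
  have iSup_range : (⨆ u ∈ U, range (M.x u).dualMap) = (M.socKer U).dualAnnihilator := by
    simp only [socKer, dualAnnihilator_iInf₂, range_dualMap_eq_dualAnnihilator_ker]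
  simp only [rad, x_dual]
  exact iSup_range

theorem soc_eq_iff (M : KRep k r) {U V : Submodule k (Fin r → k)} :
    M.soc U = M.soc V ↔ M.socKer U = M.socKer V := by
  refine ⟨fun h => ?_, fun h => by rw [soc, soc, h]⟩
  simpa only [soc, Submodule.prod_map_fst] using congrArg (Submodule.map (fst k M.V1 M.V2)) h

theorem rad_dual_eq_iff (M : KRep k r) {U V : Submodule k (Fin r → k)} :
    M.dual.rad U = M.dual.rad V ↔ M.socKer U = M.socKer V := by
  rw [rad_dual, rad_dual]
  exact Subspace.dualAnnihilator_inj

theorem finrank_soc_add_finrank_rad_dual (M : KRep k r) (U : Submodule k (Fin r → k)) :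
    finrank k (M.soc U) + finrank k (M.dual.rad U) = finrank k M.V1 + finrank k M.V2 := by
  calc
    finrank k (M.soc U) + finrank k (M.dual.rad U)
      = (finrank k (M.socKer U) + finrank k M.V2) + finrank k (M.socKer U).dualAnnihilator := by
        rw [rad_dual, soc, finrank_submodule_prod, finrank_top]; rfl
    _ = finrank k M.V1 + finrank k M.V2 := by
        rw [add_right_comm, Subspace.finrank_add_finrank_dualAnnihilator_eq]

end KRep

/-- Let `1 ≤ d < r` and `M` a representation of `Γ_r`. Then (a) `M` has
constant `d`-socle rank iff `DM` has constant `d`-radical rank, and (b) `M` has the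
equal `d`-socle property iff `DM` has the equal `d`-radical property. -/
theorem constSocRank_iff_dual_constRadRank (d : ℕ) (hd : 1 ≤ d) (hdr : d < r)
    (M : KRep k r) :
    (KRep.ConstSocRank d M ↔ KRep.ConstRadRank d M.dual) ∧
    (KRep.ESP d M ↔ KRep.ERP d M.dual) := by
  constructor
  · exact exists_forall_eq_iff_of_add_eq fun U _ => M.finrank_soc_add_finrank_rad_dual U
  · simp only [KRep.ESP, KRep.ERP, M.soc_eq_iff, M.rad_dual_eq_iff]
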